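/- Let L₁, L₂ : ℝ^n → ℝ be three times continuously differentiable with bounded first, second and third derivatives. Fix θ₀ ∈ ℝ^n and define the reversed-order updates θ₁'(h) = θ₀ − h ∇L₂(θ₀) and θ₂'(h) = θ₁'(h) − h ∇L₁(θ₁'(h)). For each h > 0 let θ̂_h solve θ̇(t) = −∇L̃_{1,2}(θ(t)) − (h/2) [∇L₁, ∇L₂](θ(t)) with θ̂_h(0) = θ₀, where L̃_{1,2}(θ) = L₁(θ) + L₂(θ) + (h/4)‖∇L₁(θ)‖² + (h/4)‖∇L₂(θ)‖². Then there exist constants C > 0 and h₀ > 0 such that for all h ∈ (0, h₀), ‖θ̂_h(h) − θ₂'(h)‖ ≤ C h³. -/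

import Mathlib

open Set

/-- The Lie bracket of two vector fields `F, G : ℝⁿ → ℝⁿ`:
`[F, G](θ) = DG(θ) F(θ) - DF(θ) G(θ)`. -/
noncomputable def lieBracket {n : ℕ}
    (F G : EuclideanSpace ℝ (Fin n) → EuclideanSpace ℝ (Fin n))
    (θ : EuclideanSpace ℝ (Fin n)) : EuclideanSpace ℝ (Fin n) :=
  fderiv ℝ G θ (F θ) - fderiv ℝ F θ (G θ)

/-!
Both sides have an expansion to second order in `h`. With `u = -∇L₂` and `v = -∇L₁`, the two Euler
steps give `θ₀ + h (u + v) + h² Dv u + O(h³)`, while the flow of `V + h W` for time `h` gives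
`θ₀ + h V + h² (DV V / 2 + W) + O(h³)`. Taking `V = u + v`, the two agree exactly when
`W = ([u, v] - Du u - Dv v) / 2`. Since Hessians are symmetric, `D(∇L) ∇L = ∇(‖∇L‖² / 2)`, so the
terms `Du u` and `Dv v` are the gradient corrections in the modified loss. Everything is local at
`θ₀`: a curve with locally bounded velocity stays within distance `O(h)` of `θ₀` up to time `h`.
-/

open Filter Asymptotics Topology

section ShortTimes

variable {E : Type*} [NormedAddCommGroup E]

/-- The filter on pairs `(h, t)` along which `h → 0⁺` while `t` ranges over all of `[0, h]`. A
statement `f =O[shortTimes] g` is an estimate at times `t ∈ [0, h]` which is uniform in `t`. -/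
def shortTimes : Filter (ℝ × ℝ) :=
  (𝓝[>] 0).bind fun h => (𝓟 (Icc 0 h)).map (Prod.mk h)

theorem eventually_shortTimes {p : ℝ × ℝ → Prop} :
    (∀ᶠ q in shortTimes, p q) ↔ ∀ᶠ h in 𝓝[>] 0, ∀ t ∈ Icc 0 h, p (h, t) :=
  Iff.rfl

theorem tendsto_fst_shortTimes : Tendsto Prod.fst shortTimes (𝓝[>] 0) :=
  fun _ hs => eventually_shortTimes.2 (Eventually.mono hs fun _ hh _ _ => hh)

theorem tendsto_diag_shortTimes : Tendsto (fun h : ℝ => (h, h)) (𝓝[>] 0) shortTimes := by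
  refine tendsto_iff_eventually.2 fun P hP => ?_
  filter_upwards [eventually_shortTimes.1 hP, self_mem_nhdsWithin] with h hP h_pos
  exact hP h (right_mem_Icc.2 (le_of_lt h_pos))

theorem tendsto_shortTimes_of_isBigO_sub {f : ℝ × ℝ → E} {a : E}
    (hf : (fun p => f p - a) =O[shortTimes] fun p => p.1) : Tendsto f shortTimes (𝓝 a) :=
  tendsto_sub_nhds_zero_iff.1 <|
    hf.trans_tendsto (tendsto_nhds_of_tendsto_nhdsWithin tendsto_fst_shortTimes)

theorem isBigO_shortTimes_of_hasDerivWithinAt [NormedSpace ℝ E] {f f' : ℝ → ℝ → E} {k : ℕ}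
    (hf : ∀ᶠ h in 𝓝[>] 0, ∀ t ∈ Icc 0 h, HasDerivWithinAt (f h) (f' h t) (Icc 0 h) t)
    (hf₀ : ∀ᶠ h in 𝓝[>] 0, f h 0 = 0)
    (hf' : (fun p : ℝ × ℝ => f' p.1 p.2) =O[shortTimes] fun p => p.1 ^ k) :
    (fun p : ℝ × ℝ => f p.1 p.2) =O[shortTimes] fun p => p.1 ^ (k + 1) := by
  obtain ⟨C, hC, hbound⟩ := hf'.exists_nonneg
  refine .of_bound C (eventually_shortTimes.2 ?_)
  filter_upwards [hf, hf₀, eventually_shortTimes.1 hbound.bound] with h hf hf₀ hbound t ht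
  have key := norm_image_sub_le_of_norm_deriv_le_segment' hf
    (fun s hs => hbound s (Ico_subset_Icc_self hs)) t ht
  rw [hf₀, sub_zero, sub_zero] at key
  calc ‖f h t‖ ≤ C * ‖h ^ k‖ * t := key
    _ ≤ C * ‖h ^ k‖ * ‖h‖ := by
      gcongr
      exact ht.2.trans (Real.le_norm_self h)
    _ = C * ‖h ^ (k + 1)‖ := by rw [pow_succ, norm_mul, mul_assoc]

end ShortTimes

section Expansions

variable {E : Type*} [NormedAddCommGroup E] [NormedSpace ℝ E]

theorem isBigO_sub_sub_fderiv_of_contDiffAt_two {F : Type*} [NormedAddCommGroup F]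
    [NormedSpace ℝ F] {f : E → F} {x₀ : E} (hf : ContDiffAt ℝ 2 f x₀) :
    (fun x => f x - f x₀ - fderiv ℝ f x₀ (x - x₀)) =O[𝓝 x₀] fun x => ‖x - x₀‖ ^ 2 := by
  have hdf : DifferentiableAt ℝ (fderiv ℝ f) x₀ :=
    (hf.fderiv_right (m := 1) le_rfl).differentiableAt one_ne_zero
  obtain ⟨C, hC, hlip⟩ := hdf.isBigO_sub.exists_nonneg
  obtain ⟨ε, hε, hball⟩ :=
    Metric.eventually_nhds_iff_ball.1 ((hf.eventually (by simp)).and hlip.bound)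
  refine .of_bound C (eventually_of_mem (Metric.ball_mem_nhds x₀ hε) fun x hx => ?_)
  have hsub : Metric.closedBall x₀ ‖x - x₀‖ ⊆ Metric.ball x₀ ε :=
    Metric.closedBall_subset_ball (mem_ball_iff_norm.1 hx)
  calc ‖f x - f x₀ - fderiv ℝ f x₀ (x - x₀)‖
      ≤ C * ‖x - x₀‖ * ‖x - x₀‖ :=
        (convex_closedBall x₀ ‖x - x₀‖).norm_image_sub_le_of_norm_fderiv_le' (𝕜 := ℝ)
          (fun y hy => (hball y (hsub hy)).1.differentiableAt two_ne_zero)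
          (fun y hy => (hball y (hsub hy)).2.trans
            (mul_le_mul_of_nonneg_left (mem_closedBall_iff_norm.1 hy) hC))
          (Metric.mem_closedBall_self (norm_nonneg _)) (mem_closedBall_iff_norm.2 le_rfl)
    _ = C * ‖‖x - x₀‖ ^ 2‖ := by rw [norm_pow, norm_norm, sq, mul_assoc]

variable {X : ℝ → E → E} {V W : E → E} {θ : ℝ → ℝ → E} {x₀ : E}

theorem isBigO_integralCurve_sub_initial
    (hX : (fun p : ℝ × E => X p.1 p.2) =O[𝓝[>] 0 ×ˢ 𝓝 x₀] (1 : ℝ × E → ℝ))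
    (hθ : ∀ᶠ h in 𝓝[>] 0, IsIntegralCurveOn (θ h) (fun _ => X h) (Icc 0 h))
    (hθ₀ : ∀ᶠ h in 𝓝[>] 0, θ h 0 = x₀) :
    (fun p : ℝ × ℝ => θ p.1 p.2 - x₀) =O[shortTimes] fun p => p.1 := by
  obtain ⟨M, hM, hbound⟩ := hX.exists_pos
  obtain ⟨P, hP, Q, hQ, hPQ⟩ := eventually_prod_iff.1 hbound.bound
  obtain ⟨ε, hε, hball⟩ := Metric.eventually_nhds_iff_ball.1 hQ
  have hsmall : ∀ᶠ h : ℝ in 𝓝[>] 0, (M + 1) * h < ε :=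
    (Continuous.tendsto' (by fun_prop) 0 0 (by simp)).mono_left nhdsWithin_le_nhds
      |>.eventually_lt_const hε
  refine .of_bound (M + 1) (eventually_shortTimes.2 ?_)
  filter_upwards [hθ, hθ₀, hP, hsmall] with h hθ hθ₀ hPh hsmall t ht
  have hderiv (s : ℝ) (hs : s ∈ Icc 0 h) :
      HasDerivWithinAt (fun s => θ h s - x₀) (X h (θ h s)) (Icc 0 h) s :=
    (hθ s hs).sub_const x₀
  -- The barrier `(M + 1) s` cannot be crossed: where it is touched, the curve is still in the ball
  -- and has speed at most `M`.
  have barrier : ‖θ h t - x₀‖ ≤ (M + 1) * t := by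
    refine image_norm_le_of_norm_deriv_right_lt_deriv_boundary (B' := fun _ => M + 1)
      (fun s hs => (hderiv s hs).continuousWithinAt)
      (fun s hs => (hderiv s (Ico_subset_Icc_self hs)).mono_of_mem_nhdsWithin
        (Icc_mem_nhdsGE_of_mem hs))
      (by simp [hθ₀]) (fun s => by simpa using (hasDerivAt_id s).const_mul (M + 1))
      (fun s hs htouch => ?_) ht
    have hmem : θ h s ∈ Metric.ball x₀ ε := by
      rw [mem_ball_iff_norm, htouch]
      exact (mul_le_mul_of_nonneg_left hs.2.le (by positivity)).trans_lt hsmall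
    have hspeed : ‖X h (θ h s)‖ ≤ M := by simpa using hPQ hPh (hball _ hmem)
    exact hspeed.trans_lt (lt_add_one M)
  exact barrier.trans
    (mul_le_mul_of_nonneg_left (ht.2.trans (Real.le_norm_self h)) (by positivity))

theorem isBigO_one_of_eventually_eq_add_smul (hX : ∀ᶠ x in 𝓝 x₀, ∀ h, X h x = V x + h • W x)
    (hV : ContinuousAt V x₀) (hW : ContinuousAt W x₀) :
    (fun p : ℝ × E => X p.1 p.2) =O[𝓝[>] 0 ×ˢ 𝓝 x₀] (1 : ℝ × E → ℝ) := by
  have hV' : Tendsto (fun p : ℝ × E => V p.2) (𝓝[>] 0 ×ˢ 𝓝 x₀) (𝓝 (V x₀)) :=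
    hV.tendsto.comp tendsto_snd
  have hW' : Tendsto (fun p : ℝ × E => W p.2) (𝓝[>] 0 ×ˢ 𝓝 x₀) (𝓝 (W x₀)) :=
    hW.tendsto.comp tendsto_snd
  have hh : Tendsto (fun p : ℝ × E => p.1) (𝓝[>] 0 ×ˢ 𝓝 x₀) (𝓝 0) :=
    tendsto_nhds_of_tendsto_nhdsWithin tendsto_fst
  refine ((hV'.add (hh.smul hW')).isBigO_one ℝ).congr' ?_ .rfl
  filter_upwards [tendsto_snd.eventually hX] with p hp using (hp p.1).symm

theorem isBigO_integralCurve_sub_firstOrder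
    (hX : ∀ᶠ x in 𝓝 x₀, ∀ h, X h x = V x + h • W x)
    (hV : DifferentiableAt ℝ V x₀) (hW : ContinuousAt W x₀)
    (hθ : ∀ᶠ h in 𝓝[>] 0, IsIntegralCurveOn (θ h) (fun _ => X h) (Icc 0 h))
    (hθ₀ : ∀ᶠ h in 𝓝[>] 0, θ h 0 = x₀) :
    (fun p : ℝ × ℝ => θ p.1 p.2 - x₀ - p.2 • V x₀) =O[shortTimes] fun p => p.1 ^ 2 := by
  have hdist : (fun p : ℝ × ℝ => θ p.1 p.2 - x₀) =O[shortTimes] fun p => p.1 :=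
    isBigO_integralCurve_sub_initial
      (isBigO_one_of_eventually_eq_add_smul hX hV.continuousAt hW) hθ hθ₀
  have hlim : Tendsto (fun p : ℝ × ℝ => θ p.1 p.2) shortTimes (𝓝 x₀) :=
    tendsto_shortTimes_of_isBigO_sub hdist
  have hVdiff : (fun p : ℝ × ℝ => V (θ p.1 p.2) - V x₀) =O[shortTimes] fun p => p.1 :=
    (hV.isBigO_sub.comp_tendsto hlim).trans hdist
  have hWbdd : (fun p : ℝ × ℝ => p.1 • W (θ p.1 p.2)) =O[shortTimes] fun p => p.1 := by
    simpa [Function.comp_def] using (isBigO_refl Prod.fst shortTimes).smul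
      ((hW.tendsto.comp hlim).isBigO_one ℝ)
  refine isBigO_shortTimes_of_hasDerivWithinAt (f := fun h t => θ h t - x₀ - t • V x₀)
    (f' := fun h t => X h (θ h t) - (1 : ℝ) • V x₀) ?_ (hθ₀.mono fun h hh => by simp [hh]) ?_
  · filter_upwards [hθ] with h hθ t ht using
      ((hθ t ht).sub_const x₀).sub ((hasDerivWithinAt_id t _).smul_const (V x₀))
  · simp only [pow_one]
    refine (hVdiff.add hWbdd).congr' ?_ .rfl
    filter_upwards [hlim.eventually hX] with p hp
    rw [hp]
    module

theorem isBigO_integralCurve_sub_secondOrder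
    (hX : ∀ᶠ x in 𝓝 x₀, ∀ h, X h x = V x + h • W x)
    (hV : ContDiffAt ℝ 2 V x₀) (hW : DifferentiableAt ℝ W x₀)
    (hθ : ∀ᶠ h in 𝓝[>] 0, IsIntegralCurveOn (θ h) (fun _ => X h) (Icc 0 h))
    (hθ₀ : ∀ᶠ h in 𝓝[>] 0, θ h 0 = x₀) :
    (fun p : ℝ × ℝ => θ p.1 p.2 -
        (x₀ + p.2 • V x₀ + p.2 ^ 2 • (1 / 2 : ℝ) • fderiv ℝ V x₀ (V x₀) + p.2 • p.1 • W x₀))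
      =O[shortTimes] fun p => p.1 ^ 3 := by
  set A := fderiv ℝ V x₀
  have hdist : (fun p : ℝ × ℝ => θ p.1 p.2 - x₀) =O[shortTimes] fun p => p.1 :=
    isBigO_integralCurve_sub_initial
      (isBigO_one_of_eventually_eq_add_smul hX hV.continuousAt hW.continuousAt) hθ hθ₀
  have hlim : Tendsto (fun p : ℝ × ℝ => θ p.1 p.2) shortTimes (𝓝 x₀) :=
    tendsto_shortTimes_of_isBigO_sub hdist
  have hVtaylor : (fun p : ℝ × ℝ => V (θ p.1 p.2) - V x₀ - A (θ p.1 p.2 - x₀))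
      =O[shortTimes] fun p => p.1 ^ 2 :=
    ((isBigO_sub_sub_fderiv_of_contDiffAt_two hV).comp_tendsto hlim).trans (hdist.norm_left.pow 2)
  have hfirst : (fun p : ℝ × ℝ => A (θ p.1 p.2 - x₀ - p.2 • V x₀))
      =O[shortTimes] fun p => p.1 ^ 2 :=
    (A.isBigO_comp _ _).trans <| isBigO_integralCurve_sub_firstOrder hX
      (hV.differentiableAt two_ne_zero) hW.continuousAt hθ hθ₀
  have hWdiff : (fun p : ℝ × ℝ => p.1 • (W (θ p.1 p.2) - W x₀))
      =O[shortTimes] fun p => p.1 ^ 2 := by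
    simpa [Function.comp_def, sq] using
      (isBigO_refl Prod.fst shortTimes).smul ((hW.isBigO_sub.comp_tendsto hlim).trans hdist)
  refine isBigO_shortTimes_of_hasDerivWithinAt
    (f := fun h t => θ h t - (x₀ + t • V x₀ + t ^ 2 • (1 / 2 : ℝ) • A (V x₀) + t • h • W x₀))
    (f' := fun h t => X h (θ h t) - (V x₀ + t • A (V x₀) + h • W x₀))
    ?_ (hθ₀.mono fun h hh => by simp [hh]) ?_
  · filter_upwards [hθ] with h hθ t ht
    have hpoly := ((((hasDerivAt_id t).smul_const (V x₀)).const_add x₀).add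
      ((hasDerivAt_pow 2 t).smul_const ((1 / 2 : ℝ) • A (V x₀)))).add
      ((hasDerivAt_id t).smul_const (h • W x₀))
    refine (hθ t ht).sub (hpoly.congr_deriv ?_).hasDerivWithinAt
    simp only [Nat.cast_ofNat, Nat.add_one_sub_one, pow_one]
    module
  · refine ((hVtaylor.add hfirst).add hWdiff).congr' ?_ .rfl
    filter_upwards [hlim.eventually hX] with p hp
    simp only [hp, map_sub, map_smul]
    module

/-- The explicit Euler step of length `h` along the vector field `v`. -/
def eulerStep (v : E → E) (h : ℝ) (x : E) : E :=
  x + h • v x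

theorem isBigO_eulerStep_comp_sub_secondOrder {u v : E → E} (hv : ContDiffAt ℝ 2 v x₀) :
    (fun h => eulerStep v h (eulerStep u h x₀) -
        (x₀ + h • (u x₀ + v x₀) + h ^ 2 • fderiv ℝ v x₀ (u x₀)))
      =O[𝓝 0] fun h => h ^ 3 := by
  have hlim : Tendsto (fun h : ℝ => x₀ + h • u x₀) (𝓝 0) (𝓝 x₀) :=
    Continuous.tendsto' (by fun_prop) 0 x₀ (by simp)
  have hstep : (fun h : ℝ => ‖(x₀ + h • u x₀) - x₀‖ ^ 2) =O[𝓝 0] fun h => h ^ 2 := by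
    refine IsBigO.pow (.norm_left (.of_bound ‖u x₀‖ (.of_forall fun h => ?_))) 2
    rw [add_sub_cancel_left, norm_smul, mul_comm]
  have htaylor := ((isBigO_sub_sub_fderiv_of_contDiffAt_two hv).comp_tendsto hlim).trans hstep
  refine ((isBigO_refl (fun h : ℝ => h) (𝓝 0)).smul htaylor).congr (fun h => ?_) fun h => ?_
  · simp only [Function.comp_apply, eulerStep, add_sub_cancel_left, map_smul]
    module
  · rw [smul_eq_mul, pow_succ' h 2]

/-- The vector field whose time-`h` flow agrees up to `O(h³)` with an Euler step of length `h` along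
`u` followed by one along `v`, in the sense of backward error analysis. -/
noncomputable def modifiedField (u v : E → E) (h : ℝ) (x : E) : E :=
  u x + v x +
    (h / 2) • (VectorField.lieBracket ℝ u v x - fderiv ℝ u x (u x) - fderiv ℝ v x (v x))

theorem isBigO_integralCurve_sub_eulerStep_comp {u v : E → E}
    (hu : ContDiffAt ℝ 2 u x₀) (hv : ContDiffAt ℝ 2 v x₀)
    (hX : ∀ᶠ x in 𝓝 x₀, ∀ h, X h x = modifiedField u v h x)
    (hθ : ∀ᶠ h in 𝓝[>] 0, IsIntegralCurveOn (θ h) (fun _ => X h) (Icc 0 h))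
    (hθ₀ : ∀ᶠ h in 𝓝[>] 0, θ h 0 = x₀) :
    (fun h => θ h h - eulerStep v h (eulerStep u h x₀)) =O[𝓝[>] 0] fun h => h ^ 3 := by
  let W (x : E) : E := (1 / 2 : ℝ) •
    (VectorField.lieBracket ℝ u v x - fderiv ℝ u x (u x) - fderiv ℝ v x (v x))
  have hu₁ : DifferentiableAt ℝ u x₀ := hu.differentiableAt two_ne_zero
  have hv₁ : DifferentiableAt ℝ v x₀ := hv.differentiableAt two_ne_zero
  have hu₂ : DifferentiableAt ℝ (fderiv ℝ u) x₀ :=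
    (hu.fderiv_right (m := 1) le_rfl).differentiableAt one_ne_zero
  have hv₂ : DifferentiableAt ℝ (fderiv ℝ v) x₀ :=
    (hv.fderiv_right (m := 1) le_rfl).differentiableAt one_ne_zero
  have hW : DifferentiableAt ℝ W x₀ := by
    unfold W VectorField.lieBracket
    fun_prop
  have hXW : ∀ᶠ x in 𝓝 x₀, ∀ h, X h x = (u + v) x + h • W x := by
    filter_upwards [hX] with x hx h
    rw [hx, modifiedField, Pi.add_apply, smul_smul, mul_one_div]
  have hflow := (isBigO_integralCurve_sub_secondOrder hXW (hu.add hv) hW hθ hθ₀).comp_tendsto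
    tendsto_diag_shortTimes
  have heuler := (isBigO_eulerStep_comp_sub_secondOrder (u := u) hv).mono
    (nhdsWithin_le_nhds (s := Ioi 0))
  refine (hflow.sub heuler).congr_left fun h => ?_
  simp only [W, VectorField.lieBracket, Function.comp_apply, fderiv_add hu₁ hv₁, Pi.add_apply,
    add_apply, map_add]
  module

end Expansions

section Gradient

variable {E : Type*} [NormedAddCommGroup E] [InnerProductSpace ℝ E] [CompleteSpace E]
  {L L₁ L₂ : E → ℝ} {x : E}

theorem contDiffAt_gradient {m n : WithTop ℕ∞} (hL : ContDiffAt ℝ n L x) (hmn : m + 1 ≤ n) :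
    ContDiffAt ℝ m (gradient L) x :=
  (InnerProductSpace.toDual ℝ E).symm.contDiff.contDiffAt.comp x (hL.fderiv_right hmn)

theorem differentiableAt_gradient (hL : ContDiffAt ℝ 2 L x) : DifferentiableAt ℝ (gradient L) x :=
  (contDiffAt_gradient (m := 1) hL le_rfl).differentiableAt one_ne_zero

theorem inner_fderiv_gradient (hL : ContDiffAt ℝ 2 L x) (u v : E) :
    inner ℝ (fderiv ℝ (gradient L) x u) v = fderiv ℝ (fderiv ℝ L) x u v := by
  have hdL : DifferentiableAt ℝ (fderiv ℝ L) x :=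
    (hL.fderiv_right (m := 1) le_rfl).differentiableAt one_ne_zero
  have hgrad := (InnerProductSpace.toDual ℝ E).symm.hasFDerivAt.comp x hdL.hasFDerivAt
  exact (congrArg (inner ℝ · v) (DFunLike.congr_fun hgrad.fderiv u)).trans
    InnerProductSpace.toDual_symm_apply

theorem inner_fderiv_gradient_comm (hL : ContDiffAt ℝ 2 L x) (u v : E) :
    inner ℝ (fderiv ℝ (gradient L) x u) v = inner ℝ u (fderiv ℝ (gradient L) x v) := by
  have hsymm : IsSymmSndFDerivAt ℝ L x := hL.isSymmSndFDerivAt (by simp)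
  rw [real_inner_comm _ u, inner_fderiv_gradient hL, inner_fderiv_gradient hL, hsymm u v]

theorem hasGradientAt_norm_gradient_sq (hL : ContDiffAt ℝ 2 L x) :
    HasGradientAt (fun y => ‖gradient L y‖ ^ 2)
      ((2 : ℝ) • fderiv ℝ (gradient L) x (gradient L x)) x := by
  rw [hasGradientAt_iff_hasFDerivAt]
  refine (differentiableAt_gradient hL).hasFDerivAt.norm_sq.congr_fderiv ?_
  ext v
  simp [inner_fderiv_gradient_comm hL]

/-- The loss `L̃₁₂` of the modified equation of two gradient descent steps with learning rate `h`,
one for each of the losses `L₁` and `L₂`. -/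
noncomputable def modifiedLoss (L₁ L₂ : E → ℝ) (h : ℝ) (x : E) : ℝ :=
  L₁ x + L₂ x + (h / 4) * ‖gradient L₁ x‖ ^ 2 + (h / 4) * ‖gradient L₂ x‖ ^ 2

theorem gradient_modifiedLoss (hL₁ : ContDiffAt ℝ 2 L₁ x) (hL₂ : ContDiffAt ℝ 2 L₂ x) (h : ℝ) :
    gradient (modifiedLoss L₁ L₂ h) x = gradient L₁ x + gradient L₂ x +
      (h / 2) • (fderiv ℝ (gradient L₁) x (gradient L₁ x) +
        fderiv ℝ (gradient L₂) x (gradient L₂ x)) := by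
  refine HasGradientAt.gradient (hasGradientAt_iff_hasFDerivAt.2 ?_)
  have h₁ := (hL₁.differentiableAt two_ne_zero).hasGradientAt.hasFDerivAt
  have h₂ := (hL₂.differentiableAt two_ne_zero).hasGradientAt.hasFDerivAt
  have hsq₁ := (hasGradientAt_norm_gradient_sq hL₁).hasFDerivAt.const_mul (h / 4)
  have hsq₂ := (hasGradientAt_norm_gradient_sq hL₂).hasFDerivAt.const_mul (h / 4)
  refine (((h₁.add h₂).add hsq₁).add hsq₂).congr_fderiv ?_
  ext v
  simp only [add_apply, smul_apply, InnerProductSpace.toDual_apply_apply, inner_add_left,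
    real_inner_smul_left, smul_eq_mul]
  ring

theorem neg_gradient_modifiedLoss_sub_lieBracket
    (hL₁ : ContDiffAt ℝ 2 L₁ x) (hL₂ : ContDiffAt ℝ 2 L₂ x) (h : ℝ) :
    -gradient (modifiedLoss L₁ L₂ h) x -
        (h / 2) • VectorField.lieBracket ℝ (gradient L₁) (gradient L₂) x =
      modifiedField (-gradient L₂) (-gradient L₁) h x := by
  simp only [gradient_modifiedLoss hL₁ hL₂, modifiedField, VectorField.lieBracket, fderiv_neg,
    neg_apply, Pi.neg_apply, map_neg]
  module

theorem continual_learning_reversed_order_general {θ₀ : E} {θ : ℝ → ℝ → E}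
    (hL₁ : ContDiffAt ℝ 3 L₁ θ₀) (hL₂ : ContDiffAt ℝ 3 L₂ θ₀)
    (hθ : ∀ᶠ h in 𝓝[>] 0, IsIntegralCurveOn (θ h)
      (fun _ x => -gradient (modifiedLoss L₁ L₂ h) x -
        (h / 2) • VectorField.lieBracket ℝ (gradient L₁) (gradient L₂) x) (Icc 0 h))
    (hθ₀ : ∀ᶠ h in 𝓝[>] 0, θ h 0 = θ₀) :
    (fun h => θ h h - eulerStep (-gradient L₁) h (eulerStep (-gradient L₂) h θ₀))
      =O[𝓝[>] 0] fun h => h ^ 3 := by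
  have hC₂ {L : E → ℝ} (hL : ContDiffAt ℝ 3 L θ₀) : ∀ᶠ x in 𝓝 θ₀, ContDiffAt ℝ 2 L x :=
    (hL.of_le (by norm_num)).eventually (by simp)
  refine isBigO_integralCurve_sub_eulerStep_comp (contDiffAt_gradient hL₂ (by norm_num)).neg
    (contDiffAt_gradient hL₁ (by norm_num)).neg ?_ hθ hθ₀
  filter_upwards [hC₂ hL₁, hC₂ hL₂] with x h₁ h₂ h using
    neg_gradient_modifiedLoss_sub_lieBracket h₁ h₂ h

end Gradient

theorem exists_Ioo_norm_le_mul_pow_of_isBigO {E : Type*} [Norm E] {f : ℝ → E} {k : ℕ}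
    (hf : f =O[𝓝[>] 0] fun h => h ^ k) :
    ∃ C > (0 : ℝ), ∃ h₀ > (0 : ℝ), ∀ h ∈ Ioo (0 : ℝ) h₀, ‖f h‖ ≤ C * h ^ k := by
  obtain ⟨C, hC, hbound⟩ := hf.exists_pos
  obtain ⟨h₀, hh₀, hsub⟩ := mem_nhdsGT_iff_exists_Ioo_subset.1 hbound.bound
  refine ⟨C, hC, h₀, hh₀, fun h hh => ?_⟩
  have hle : ‖f h‖ ≤ C * ‖h ^ k‖ := hsub hh
  rwa [Real.norm_of_nonneg (pow_nonneg hh.1.le k)] at hle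

/-- **Continual-learning modified equation with the task order reversed.**
Let `L₁, L₂ : ℝⁿ → ℝ` be C³ with bounded first, second and third derivatives, and let
`θ₂'(h)` be the result of a gradient descent step on `L₂` followed by one on `L₁`, both
of learning rate `h`, starting at `θ₀`. If for each `h > 0` the curve `θt h` solves
`θ̇ = -∇L̃₁₂(θ) - (h/2)[∇L₁, ∇L₂](θ)` with `θt h 0 = θ₀`, where
`L̃₁₂ = L₁ + L₂ + (h/4)‖∇L₁‖² + (h/4)‖∇L₂‖²`, then the discretization drift
`‖θt h h - θ₂'(h)‖` is of order `O(h³)`. -/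
theorem continual_learning_reversed_order {n : ℕ}
    (L₁ L₂ : EuclideanSpace ℝ (Fin n) → ℝ)
    (hL₁ : ContDiff ℝ 3 L₁) (hL₂ : ContDiff ℝ 3 L₂)
    (K : ℝ)
    (hb₁ : ∀ i : ℕ, 1 ≤ i → i ≤ 3 → ∀ x, ‖iteratedFDeriv ℝ i L₁ x‖ ≤ K)
    (hb₂ : ∀ i : ℕ, 1 ≤ i → i ≤ 3 → ∀ x, ‖iteratedFDeriv ℝ i L₂ x‖ ≤ K)
    (θ₀ : EuclideanSpace ℝ (Fin n))
    (θ₁' θ₂' : ℝ → EuclideanSpace ℝ (Fin n))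
    (hθ₁' : ∀ h : ℝ, θ₁' h = θ₀ - h • gradient L₂ θ₀)
    (hθ₂' : ∀ h : ℝ, θ₂' h = θ₁' h - h • gradient L₁ (θ₁' h))
    (Lmod : ℝ → EuclideanSpace ℝ (Fin n) → ℝ)
    (hLmod : ∀ h : ℝ, ∀ θ : EuclideanSpace ℝ (Fin n),
      Lmod h θ = L₁ θ + L₂ θ + (h / 4) * ‖gradient L₁ θ‖ ^ 2
        + (h / 4) * ‖gradient L₂ θ‖ ^ 2)
    (θt : ℝ → ℝ → EuclideanSpace ℝ (Fin n))
    (hinit : ∀ h : ℝ, 0 < h → θt h 0 = θ₀)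
    (hode : ∀ h : ℝ, 0 < h → ∀ t ∈ Icc (0 : ℝ) h,
      HasDerivAt (θt h)
        (-(gradient (Lmod h) (θt h t))
          - (h / 2) • lieBracket
              (fun x => gradient L₁ x) (fun x => gradient L₂ x) (θt h t)) t) :
    ∃ C > (0 : ℝ), ∃ h₀ > (0 : ℝ), ∀ h ∈ Ioo (0 : ℝ) h₀,
      ‖θt h h - θ₂' h‖ ≤ C * h ^ 3 := by
  obtain rfl : Lmod = modifiedLoss L₁ L₂ := funext₂ hLmod
  simpa [hθ₁', hθ₂', eulerStep, sub_eq_add_neg] using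
    exists_Ioo_norm_le_mul_pow_of_isBigO <| continual_learning_reversed_order_general
      hL₁.contDiffAt hL₂.contDiffAt
      (eventually_mem_nhdsWithin.mono fun h hh t ht => (hode h hh t ht).hasDerivWithinAt)
      (eventually_mem_nhdsWithin.mono hinit)
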